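/- arXiv:1303.3345 — 2 statements merged into one kernel-verified Lean document; each statement's English description precedes it below -/
import Mathlib

section
/- Assume the base hypotheses. Suppose f ∈ RV₀(β) for some β > 1 and g ∈ RV_∞(-θ) for some θ > 0, that the unique continuous solution x of x'(t) = -f(x(t)) + g(t), x(0) = ξ > 0, satisfies x(t) → 0 as t → ∞, and that lim_{t→∞} g(t)/(f∘F⁻¹)(t) = L ∈ [0,∞]. Then: (i) if L = 0, lim_{t→∞} F(x(t))/t = 1; (ii) if L ∈ (0,∞), lim_{t→∞} F(x(t))/t = Λ*, where Λ* ∈ (0,1) is the unique solution of (1 - Λ*)·Λ*^{-β/(β-1)} = L; (iii) if L = ∞, lim_{t→∞} f(x(t))/g(t) = 1. -/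
open Filter Real Set Topology MeasureTheory

noncomputable section

/-- A function `f : (0,∞) → (0,∞)` is regularly varying at `0` with index `β` if
`f(λx)/f(x) → λ^β` as `x → 0⁺` for every `λ > 0`. -/
def RVat0 (f : ℝ → ℝ) (β : ℝ) : Prop :=
  ∀ lam : ℝ, 0 < lam →
    Tendsto (fun x => f (lam * x) / f x) (nhdsWithin 0 (Set.Ioi 0)) (nhds (lam ^ β))

/-- A function `h : (0,∞) → (0,∞)` is regularly varying at `∞` with index `α` if
`h(λt)/h(t) → λ^α` as `t → ∞` for every `λ > 0`. -/
def RVatInf (h : ℝ → ℝ) (α : ℝ) : Prop :=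
  ∀ lam : ℝ, 0 < lam →
    Tendsto (fun t => h (lam * t) / h t) atTop (nhds (lam ^ α))

/-- A continuous solution of the perturbed ODE `x'(t) = -f(x(t)) + g(t)`, `t > 0`,
with initial condition `x(0) = ξ`. -/
def IsSol (f g : ℝ → ℝ) (ξ : ℝ) (x : ℝ → ℝ) : Prop :=
  ContinuousOn x (Set.Ici 0) ∧ x 0 = ξ ∧
    ∀ t : ℝ, 0 < t → HasDerivAt x (-f (x t) + g t) t

/-!
The function `y = F ∘ x` satisfies `y' = 1 - g / f(x)`. Since `F` is regularly varying at `0` with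
index `1 - β`, along `y = λ t` one has `f(F⁻¹(t)) / f(x) ~ λ ^ (β / (β - 1))`, so that
`y' ~ 1 - L λ ^ (β / (β - 1))`. Hence the line `λ t` eventually bounds `y` from above or from below
according to the sign of `λ + L λ ^ (β / (β - 1)) - 1`, and `y / t` tends to the root `Λ`.

If `L = ∞`, every `λ > 0` gives an upper barrier, so `y = o(t)`. Then each interval `[ρ t, t]`
contains points where `y'` is nearly nonpositive and `f(x)` is nearly at least `f(x(t))`, and points
with the opposite inequalities. As `g` varies little on `[ρ t, t]` for `ρ` close to `1`, this
squeezes `f(x(t)) / g(t)` to `1`.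
-/

section Calculus

variable {a c l : ℝ}

theorem forall_ge_neg_of_deriv_neg_of_eq_zero {v v' : ℝ → ℝ}
    (hv : ∀ t ≥ a, HasDerivAt v (v' t) t) (ha : v a < 0)
    (hzero : ∀ t ≥ a, v t = 0 → v' t < 0) : ∀ t ≥ a, v t < 0 := by
  have hnonpos : ∀ t ≥ a, v t ≤ 0 := fun t ht =>
    image_le_of_deriv_right_lt_deriv_boundary (f' := v') (b := t)
      (fun s hs => (hv s hs.1).continuousAt.continuousWithinAt)
      (fun s hs => (hv s hs.1).hasDerivWithinAt) ha.le (fun s => hasDerivAt_const s 0)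
      (fun s hs => hzero s hs.1) ⟨ht, le_rfl⟩
  intro t ht
  refine (hnonpos t ht).lt_of_ne fun hvt => ?_
  have hat : a < t := ht.lt_of_ne fun hat => by subst hat; exact ha.ne hvt
  have hmax : IsLocalMax v t := by
    filter_upwards [Ioi_mem_nhds hat] with s hs
    exact (hnonpos s hs.le).trans_eq hvt.symm
  exact (hzero t ht hvt).ne (hmax.hasDerivAt_eq_zero (hv t ht))

theorem exists_ge_neg_of_deriv_le_neg_of_nonneg {v v' : ℝ → ℝ} (hc : 0 < c)
    (hv : ∀ t ≥ a, HasDerivAt v (v' t) t) (hdrift : ∀ t ≥ a, 0 ≤ v t → v' t ≤ -c) :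
    ∃ t ≥ a, v t < 0 := by
  by_contra! hnonneg
  have hdecay : ∀ t ≥ a, v t - v a ≤ -c * (t - a) := by
    intro t ht
    refine (convex_Ici a).image_sub_le_mul_sub_of_deriv_le
      (fun s hs => (hv s hs).continuousAt.continuousWithinAt)
      (fun s hs => (hv s (interior_subset hs)).differentiableAt.differentiableWithinAt)
      (fun s hs => ?_) a self_mem_Ici t ht ht
    have hs : a ≤ s := interior_subset hs
    exact (hv s hs).deriv.trans_le (hdrift s hs (hnonneg s hs))
  have hva : 0 ≤ v a := hnonneg a le_rfl
  have hlate : a ≤ a + (v a + 1) / c := le_add_of_nonneg_right (by positivity)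
  have hlow := hdecay _ hlate
  rw [add_sub_cancel_left, neg_mul, mul_div_cancel₀ _ hc.ne'] at hlow
  linarith [hnonneg _ hlate]

theorem eventually_neg_of_deriv_le_neg_of_nonneg {v v' : ℝ → ℝ} (hc : 0 < c)
    (hv : ∀ᶠ t in atTop, HasDerivAt v (v' t) t)
    (hdrift : ∀ᶠ t in atTop, 0 ≤ v t → v' t ≤ -c) : ∀ᶠ t in atTop, v t < 0 := by
  obtain ⟨T, hT⟩ := eventually_atTop.1 (hv.and hdrift)
  obtain ⟨t₀, ht₀, hneg⟩ := exists_ge_neg_of_deriv_le_neg_of_nonneg hc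
    (fun t ht => (hT t ht).1) (fun t ht => (hT t ht).2)
  filter_upwards [eventually_ge_atTop t₀] with t ht
  refine forall_ge_neg_of_deriv_neg_of_eq_zero (fun s hs => (hT s (ht₀.trans hs)).1) hneg
    (fun s hs hvs => ?_) t ht
  exact ((hT s (ht₀.trans hs)).2 hvs.ge).trans_lt (neg_lt_zero.2 hc)

theorem exists_mem_Ioc_le_and_deriv_le {b : ℝ} {y y' : ℝ → ℝ} (hab : a < b) (hc : 0 ≤ c)
    (hy : ∀ s ∈ Icc a b, HasDerivAt y (y' s) s) (hrise : y b - y a < c * (b - a)) :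
    ∃ s ∈ Ioc a b, y s ≤ y b ∧ y' s ≤ c := by
  have htilt : ∀ s ∈ Icc a b, HasDerivAt (fun r => y r - c * r) (y' s - c) s := fun s hs =>
    (hy s hs).sub (by simpa using (hasDerivAt_id s).const_mul c)
  obtain ⟨s, hs, hmin⟩ := isCompact_Icc.exists_isMinOn (nonempty_Icc.2 hab.le)
    fun s hs => (htilt s hs).continuousAt.continuousWithinAt
  have hsb : y s - c * s ≤ y b - c * b := hmin (right_mem_Icc.2 hab.le)
  have has : a < s := hs.1.lt_of_ne fun h => by subst h; linarith
  refine ⟨s, ⟨has, hs.2⟩, by nlinarith [hs.2], ?_⟩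
  have hdir : a - s ∈ posTangentConeAt (Icc a b) s := sub_mem_posTangentConeAt_of_segment_subset
    ((convex_Icc a b).segment_subset hs (left_mem_Icc.2 hab.le))
  have hslope : 0 ≤ (a - s) * (y' s - c) := by
    simpa using hmin.localize.hasFDerivWithinAt_nonneg
      (htilt s hs).hasFDerivAt.hasFDerivWithinAt hdir
  nlinarith

theorem eventually_forall_ge_mul {ρ : ℝ} {p : ℝ → Prop} (hρ : 0 < ρ) (hp : ∀ᶠ s in atTop, p s) :
    ∀ᶠ t in atTop, ∀ s ≥ ρ * t, p s :=
  (tendsto_id.const_mul_atTop hρ).eventually (eventually_forall_ge_atTop.2 hp)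

theorem eventually_exists_mem_Icc_le_and_deriv_le {ρ : ℝ} {y y' : ℝ → ℝ}
    (hy : ∀ᶠ t in atTop, HasDerivAt y (y' t) t) (hsub : Tendsto (fun t => y t / t) atTop (𝓝 0))
    (hc : 0 < c) (hρ : ρ ∈ Ioo 0 1) :
    ∀ᶠ t in atTop, ∃ s ∈ Icc (ρ * t) t, y s ≤ y t ∧ y' s ≤ c := by
  have hrise : Tendsto (fun t => y t / t - ρ * (y (ρ * t) / (ρ * t))) atTop (𝓝 0) := by
    simpa using hsub.sub ((hsub.comp (tendsto_id.const_mul_atTop hρ.1)).const_mul ρ)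
  filter_upwards [eventually_gt_atTop 0, eventually_forall_ge_mul hρ.1 hy,
    hrise.eventually_lt_const (mul_pos hc (sub_pos.2 hρ.2))] with t ht hyt hrise_t
  have hρt : ρ * t < t := mul_lt_of_lt_one_left ht hρ.2
  have hrise_eq : (y t / t - ρ * (y (ρ * t) / (ρ * t))) * t = y t - y (ρ * t) := by
    have := hρ.1.ne'
    field_simp
  obtain ⟨s, hs, hys, hy's⟩ := exists_mem_Ioc_le_and_deriv_le hρt hc.le
    (fun s hs => hyt s hs.1) (by nlinarith [mul_lt_mul_of_pos_right hrise_t ht])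
  exact ⟨s, Ioc_subset_Icc_self hs, hys, hy's⟩

theorem exists_one_lt_pow_eq {K : ℝ} (hK : 1 < K) {n : ℕ} (hn : n ≠ 0) : ∃ η > 1, η ^ n = K :=
  ⟨K ^ (n⁻¹ : ℝ), one_lt_rpow hK (by positivity), rpow_inv_natCast_pow (zero_le_one.trans hK.le) hn⟩

theorem eventually_lt_div_of_tendsto_deriv_div {G F G' F' : ℝ → ℝ} {m : ℝ}
    (hG : ∀ᶠ x in 𝓝[>] a, HasDerivAt G (G' x) x) (hF : ∀ᶠ x in 𝓝[>] a, HasDerivAt F (F' x) x)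
    (hF' : ∀ᶠ x in 𝓝[>] a, F' x < 0) (hF_top : Tendsto F (𝓝[>] a) atTop)
    (hlim : Tendsto (fun x => G' x / F' x) (𝓝[>] a) (𝓝 l)) (hm : m < l) :
    ∀ᶠ x in 𝓝[>] a, m < G x / F x := by
  obtain ⟨k, hmk, hkl⟩ := exists_between hm
  obtain ⟨x₀, hx₀, hIoc⟩ := mem_nhdsGT_iff_exists_Ioc_subset.1
    (((hG.and hF).and hF').and (hlim.eventually_const_lt hkl))
  have hderiv : ∀ x ∈ Ioc a x₀, HasDerivAt (fun x => G x - k * F x) (G' x - k * F' x) x :=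
    fun x hx => (hIoc hx).1.1.1.sub ((hIoc hx).1.1.2.const_mul k)
  have hanti : AntitoneOn (fun x => G x - k * F x) (Ioc a x₀) := by
    refine antitoneOn_of_hasDerivWithinAt_nonpos (convex_Ioc a x₀)
      (fun x hx => (hderiv x hx).continuousAt.continuousWithinAt)
      (fun x hx => (hderiv x (interior_subset hx)).hasDerivWithinAt) fun x hx => ?_
    obtain ⟨⟨-, hneg⟩, hk⟩ := hIoc (interior_subset hx)
    exact sub_nonpos.2 ((lt_div_iff_of_neg hneg).1 hk).le
  have herror : Tendsto (fun x => k + (G x₀ - k * F x₀) / F x) (𝓝[>] a) (𝓝 k) := by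
    simpa using (hF_top.const_div_atTop (G x₀ - k * F x₀)).const_add k
  filter_upwards [herror.eventually_const_lt hmk, Ioc_mem_nhdsGT hx₀, hF_top.eventually_gt_atTop 0]
    with x hmx hx hFx
  calc m < k + (G x₀ - k * F x₀) / F x := hmx
    _ ≤ k + (G x - k * F x) / F x := by
      gcongr k + ?_ / F x
      exact hanti hx (right_mem_Ioc.2 hx₀) hx.2
    _ = G x / F x := by field_simp; ring

theorem tendsto_div_of_tendsto_deriv_div_of_tendsto_atTop {G F G' F' : ℝ → ℝ}
    (hG : ∀ᶠ x in 𝓝[>] a, HasDerivAt G (G' x) x) (hF : ∀ᶠ x in 𝓝[>] a, HasDerivAt F (F' x) x)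
    (hF' : ∀ᶠ x in 𝓝[>] a, F' x < 0) (hF_top : Tendsto F (𝓝[>] a) atTop)
    (hlim : Tendsto (fun x => G' x / F' x) (𝓝[>] a) (𝓝 l)) :
    Tendsto (fun x => G x / F x) (𝓝[>] a) (𝓝 l) := by
  refine tendsto_order.2
    ⟨fun m hm => eventually_lt_div_of_tendsto_deriv_div hG hF hF' hF_top hlim hm, fun m hm => ?_⟩
  have hneg := eventually_lt_div_of_tendsto_deriv_div (G := -G) (G' := -G')
    (hG.mono fun x hx => hx.neg) hF hF' hF_top
    (by simpa only [Pi.neg_apply, neg_div] using hlim.neg) (neg_lt_neg hm)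
  simpa only [Pi.neg_apply, neg_div, neg_lt_neg_iff] using hneg

theorem tendsto_div_one_of_eventually_le_mul {ι : Type*} {𝓕 : Filter ι} {u v : ι → ℝ}
    (hv : ∀ᶠ i in 𝓕, 0 < v i) (huv : ∀ K > 1, ∀ᶠ i in 𝓕, u i ≤ K * v i)
    (hvu : ∀ K > 1, ∀ᶠ i in 𝓕, v i ≤ K * u i) : Tendsto (fun i => u i / v i) 𝓕 (𝓝 1) := by
  refine tendsto_order.2 ⟨fun m hm => ?_, fun m hm => ?_⟩
  · obtain ⟨k, hk, hk1⟩ := exists_between (max_lt hm one_pos)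
    have hk0 : 0 < k := (le_max_right m 0).trans_lt hk
    filter_upwards [hv, hvu k⁻¹ ((one_lt_inv₀ hk0).2 hk1)] with i hi hle
    calc m < k := (le_max_left m 0).trans_lt hk
      _ ≤ u i / v i := (le_div_iff₀ hi).2 ((le_inv_mul_iff₀ hk0).1 hle)
  · obtain ⟨k, hk1, hk⟩ := exists_between hm
    filter_upwards [hv, huv k hk1] with i hi hle
    exact ((div_le_iff₀ hi).2 hle).trans_lt hk

end Calculus

section RegularVariation

/-- The additive form of regular variation: `h` is `log ∘ φ ∘ exp` for a function `φ` regularly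
varying at infinity with index `α`. -/
def HasLinearIncrements (h : ℝ → ℝ) (α : ℝ) : Prop :=
  ∀ s : ℝ, Tendsto (fun u => h (u + s) - h u) atTop (𝓝 (α * s))

/-- `f` is increasing near `0⁺` up to a factor arbitrarily close to `1`. -/
def IsAlmostIncreasingAtZero (f : ℝ → ℝ) : Prop :=
  ∀ η > 1, ∀ᶠ b in 𝓝[>] 0, ∀ a ∈ Ioc 0 b, f a ≤ η * f b

/-- `g` varies on `[ρt, t]` by a factor close to `1` once `ρ < 1` is close to `1`, uniformly for
large `t`; such functions are also called pseudo-regularly varying. -/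
def IsSlowlyOscillating (g : ℝ → ℝ) : Prop :=
  ∀ η > 1, ∃ ρ ∈ Ioo 0 1, ∀ᶠ t in atTop, ∀ s ∈ Icc (ρ * t) t, g s ≤ η * g t ∧ g t ≤ η * g s

variable {f h : ℝ → ℝ} {α β ε : ℝ}

namespace HasLinearIncrements

-- Baire category turns the pointwise convergence of the increments into a bound that is uniform on
-- an interval of increments `s`.
theorem exists_ball_forall_abs_sub_le (hh : HasLinearIncrements h α) (hcont : Continuous h)
    (hε : 0 < ε) :
    ∃ a, ∃ δ > 0, ∀ᶠ u in atTop, ∀ s ∈ Metric.ball a δ, |h (u + s) - h u - α * s| ≤ ε := by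
  let A : ℕ → Set ℝ := fun n => ⋂ u ∈ Ici (n : ℝ), {s | |h (u + s) - h u - α * s| ≤ ε}
  have hclosed : ∀ n, IsClosed (A n) := fun n =>
    isClosed_biInter fun u _ => isClosed_le (by fun_prop) continuous_const
  have hcover : ⋃ n, A n = univ := by
    refine eq_univ_of_forall fun s => ?_
    have hs : Tendsto (fun u => |h (u + s) - h u - α * s|) atTop (𝓝 0) := by
      simpa using ((hh s).sub_const (α * s)).abs
    obtain ⟨U, hU⟩ := eventually_atTop.1 (hs.eventually_le_const hε)
    obtain ⟨n, hn⟩ := exists_nat_ge U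
    exact mem_iUnion.2 ⟨n, mem_iInter₂.2 fun u hu => hU u (hn.trans hu)⟩
  obtain ⟨n, a, ha⟩ := nonempty_interior_of_iUnion_of_closed hclosed hcover
  obtain ⟨δ, hδ, hball⟩ := Metric.mem_nhds_iff.1 (mem_interior_iff_mem_nhds.1 ha)
  refine ⟨a, δ, hδ, ?_⟩
  filter_upwards [eventually_ge_atTop (n : ℝ)] with u hu s hs
  exact mem_iInter₂.1 (hball hs) u hu

theorem exists_forall_abs_sub_le (hh : HasLinearIncrements h α) (hcont : Continuous h)
    (hε : 0 < ε) :
    ∃ δ > 0, ∀ᶠ u in atTop, ∀ r ∈ Icc 0 δ, |h (u + r) - h u| ≤ ε := by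
  obtain ⟨a, δ, hδ, hball⟩ := hh.exists_ball_forall_abs_sub_le hcont (show 0 < ε / 4 by positivity)
  have hα : 0 < 2 * (|α| + 1) := by positivity
  refine ⟨min (δ / 2) (ε / (2 * (|α| + 1))), by positivity, ?_⟩
  filter_upwards [(tendsto_atTop_add_const_right atTop (-a) tendsto_id).eventually hball]
    with u hu r ⟨hr₀, hr⟩
  have hrδ : r < δ := (hr.trans (min_le_left _ _)).trans_lt (half_lt_self hδ)
  have hrα : |α * r| ≤ ε / 2 := by
    have := (le_div_iff₀ hα).1 (hr.trans (min_le_right _ _))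
    rw [abs_mul, abs_of_nonneg hr₀]
    nlinarith
  have hstep := hu (a + r) (by simpa [abs_of_nonneg hr₀] using hrδ)
  have hbase := hu a (Metric.mem_ball_self hδ)
  simp only [id_eq, neg_add_cancel_left, add_assoc, add_zero,
    neg_add_cancel] at hstep hbase
  rw [abs_le] at *
  constructor <;> linarith

theorem eventually_forall_ge_le_add (hh : HasLinearIncrements h α) (hcont : Continuous h)
    (hα : α < 0) (hε : 0 < ε) : ∀ᶠ u in atTop, ∀ v ≥ u, h v ≤ h u + ε := by
  obtain ⟨δ, hδ, hosc⟩ := hh.exists_forall_abs_sub_le hcont hε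
  have hdrop : ∀ᶠ u in atTop, h (u + δ) - h u < 0 :=
    (hh δ).eventually_lt_const (mul_neg_of_neg_of_pos hα hδ)
  obtain ⟨U, hU⟩ := eventually_atTop.1 (hosc.and hdrop)
  filter_upwards [eventually_ge_atTop U] with u hu v huv
  have hsteps : ∀ k : ℕ, ∀ w ≥ U, h (w + k * δ) ≤ h w := by
    intro k w hw
    induction k with
    | zero => simp
    | succ k ih =>
      have hstep := (hU (w + k * δ) (hw.trans (le_add_of_nonneg_right (by positivity)))).2
      rw [Nat.cast_succ, add_one_mul, ← add_assoc]
      linarith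
  set k := ⌊(v - u) / δ⌋₊
  have hk_le : k * δ ≤ v - u :=
    (le_div_iff₀ hδ).1 (Nat.floor_le (div_nonneg (sub_nonneg.2 huv) hδ.le))
  have hk_lt : v - u < (k + 1) * δ := (div_lt_iff₀ hδ).1 (Nat.lt_floor_add_one _)
  calc h v = h (u + (v - u - k * δ) + k * δ) := by congr 1; ring
    _ ≤ h (u + (v - u - k * δ)) := hsteps k _ (by linarith)
    _ ≤ h u + ε := by
      linarith [(abs_le.1 ((hU u hu).1 (v - u - k * δ) ⟨by linarith, by linarith⟩)).2]

end HasLinearIncrements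

theorem continuous_log_comp_exp (hcont : ContinuousOn h (Ioi 0)) (hpos : ∀ t > 0, 0 < h t) :
    Continuous fun u => log (h (exp u)) :=
  (hcont.comp_continuous continuous_exp exp_pos).log fun u => (hpos _ (exp_pos u)).ne'

namespace RVatInf

theorem hasLinearIncrements (hh : RVatInf h α) (hpos : ∀ t > 0, 0 < h t) :
    HasLinearIncrements (fun u => log (h (exp u))) α := by
  intro s
  have hlog := ((hh (exp s) (exp_pos s)).comp tendsto_exp_atTop).log (by positivity)
  rw [log_rpow (exp_pos s), log_exp] at hlog
  refine hlog.congr fun u => ?_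
  rw [Function.comp_apply, log_div (hpos _ (by positivity)).ne' (hpos _ (exp_pos u)).ne',
    ← exp_add, add_comm s u]

theorem isSlowlyOscillating (hh : RVatInf h α) (hcont : ContinuousOn h (Ioi 0))
    (hpos : ∀ t > 0, 0 < h t) : IsSlowlyOscillating h := by
  intro η hη
  have hη₀ : 0 < η := one_pos.trans hη
  obtain ⟨δ, hδ, hosc⟩ := (hh.hasLinearIncrements hpos).exists_forall_abs_sub_le
    (continuous_log_comp_exp hcont hpos) (log_pos hη)
  have hlog : Tendsto (fun t => log t - δ) atTop atTop :=
    tendsto_atTop_add_const_right _ _ tendsto_log_atTop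
  obtain ⟨U, hU⟩ := eventually_atTop.1 hosc
  refine ⟨exp (-δ), ⟨exp_pos _, exp_lt_one_iff.2 (neg_lt_zero.2 hδ)⟩, ?_⟩
  filter_upwards [hlog.eventually_ge_atTop U, eventually_gt_atTop 0] with t ht ht₀ s ⟨hts, hst⟩
  have hs₀ : 0 < s := lt_of_lt_of_le (by positivity) hts
  have hlog_ts := log_le_log (by positivity) hts
  rw [log_mul (exp_pos _).ne' ht₀.ne', log_exp] at hlog_ts
  have hlog_st := log_le_log hs₀ hst
  have hbound := hU (log s) (by linarith) (log t - log s) ⟨by linarith, by linarith⟩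
  simp only [add_sub_cancel, exp_log ht₀, exp_log hs₀] at hbound
  obtain ⟨hlower, hupper⟩ := abs_le.1 hbound
  constructor
  · rw [← log_le_log_iff (hpos s hs₀) (mul_pos hη₀ (hpos t ht₀)), log_mul hη₀.ne' (hpos t ht₀).ne']
    linarith
  · rw [← log_le_log_iff (hpos t ht₀) (mul_pos hη₀ (hpos s hs₀)), log_mul hη₀.ne' (hpos s hs₀).ne']
    linarith

theorem eventually_forall_ge_le_mul (hh : RVatInf h α) (hcont : ContinuousOn h (Ioi 0))
    (hpos : ∀ t > 0, 0 < h t) (hα : α < 0) {η : ℝ} (hη : 1 < η) :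
    ∀ᶠ t in atTop, ∀ s ≥ t, h s ≤ η * h t := by
  have hη₀ : 0 < η := one_pos.trans hη
  have hadd := (hh.hasLinearIncrements hpos).eventually_forall_ge_le_add
    (continuous_log_comp_exp hcont hpos) hα (log_pos hη)
  filter_upwards [tendsto_log_atTop.eventually hadd, eventually_gt_atTop 0] with t ht ht₀ s hts
  have hs₀ : 0 < s := ht₀.trans_le hts
  have hbound := ht (log s) (log_le_log ht₀ hts)
  simp only [exp_log ht₀, exp_log hs₀] at hbound
  rwa [← log_le_log_iff (hpos s hs₀) (mul_pos hη₀ (hpos t ht₀)), log_mul hη₀.ne' (hpos t ht₀).ne',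
    add_comm]

end RVatInf

namespace RVat0

theorem rvatInf_comp_inv (hf : RVat0 f β) : RVatInf (fun t => f t⁻¹) (-β) := by
  intro lam hlam
  have hinv := (hf lam⁻¹ (inv_pos.2 hlam)).comp tendsto_inv_atTop_nhdsGT_zero
  rw [inv_rpow hlam.le, ← rpow_neg hlam.le] at hinv
  exact hinv.congr fun t => by simp only [Function.comp_apply, mul_inv]

theorem isAlmostIncreasingAtZero (hf : RVat0 f β) (hcont : ContinuousOn f (Ioi 0))
    (hpos : ∀ y > 0, 0 < f y) (hβ : 0 < β) : IsAlmostIncreasingAtZero f := by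
  intro η hη
  have hinv := hf.rvatInf_comp_inv.eventually_forall_ge_le_mul
    (hcont.comp (continuousOn_inv₀.mono fun t ht => (mem_Ioi.1 ht).ne') fun t ht =>
      mem_Ioi.2 (inv_pos.2 ht))
    (fun t ht => hpos _ (inv_pos.2 ht)) (neg_lt_zero.2 hβ) hη
  filter_upwards [tendsto_inv_nhdsGT_zero.eventually hinv] with b hb a ⟨ha, hab⟩
  simpa only [inv_inv] using hb a⁻¹ (inv_anti₀ ha hab)

theorem eventually_forall_le_mul (hf : RVat0 f β) (hcont : ContinuousOn f (Ioi 0))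
    (hpos : ∀ y > 0, 0 < f y) (hβ : 0 < β) {μ C : ℝ} (hμ : 0 < μ) (hC : μ ^ β < C) :
    ∀ᶠ y in 𝓝[>] 0, ∀ x ∈ Ioc 0 (μ * y), f x ≤ C * f y := by
  obtain ⟨B, hμB, hBC⟩ := exists_between hC
  have hB : 0 < B := (rpow_pos_of_pos hμ β).trans hμB
  have hincr := hf.isAlmostIncreasingAtZero hcont hpos hβ (C / B) ((one_lt_div hB).2 hBC)
  filter_upwards [eventually_nhdsGT_zero_mul_left hμ hincr, (hf μ hμ).eventually_lt_const hμB,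
    self_mem_nhdsWithin] with y hy hratio hy₀ x hx
  calc f x ≤ C / B * f (μ * y) := hy x hx
    _ ≤ C / B * (B * f y) := by
      gcongr
      · exact div_nonneg (hB.trans hBC).le hB.le
      · exact ((div_lt_iff₀ (hpos y hy₀)).1 hratio).le
    _ = C * f y := by field_simp

end RVat0

end RegularVariation

section Primitive

/-- `F` is a primitive of `-1/f` on `(0,∞)` for a positive `f`, and `F(0⁺) = ∞`. The normalization
`F(1) = 0` of `F(x) = ∫_x^1 du/f(u)` is not imposed. -/
structure IsReciprocalPrimitive (f F : ℝ → ℝ) : Prop where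
  pos : ∀ y > 0, 0 < f y
  hasDerivAt : ∀ y > 0, HasDerivAt F (-(f y)⁻¹) y
  tendsto_atTop : Tendsto F (𝓝[>] 0) atTop

namespace IsReciprocalPrimitive

variable {f F : ℝ → ℝ} {β lam D : ℝ}

theorem of_intervalIntegral {b : ℝ} (hb : 0 < b) (hcont : ContinuousOn f (Ioi 0))
    (hpos : ∀ y > 0, 0 < f y) (hF : ∀ y > 0, F y = ∫ u in y..b, 1 / f u)
    (hF_top : Tendsto F (𝓝[>] 0) atTop) : IsReciprocalPrimitive f F := by
  refine ⟨hpos, fun y hy => ?_, hF_top⟩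
  have hinv : ContinuousOn (fun u => 1 / f u) (Ioi 0) :=
    continuousOn_const.div hcont fun u hu => (hpos u hu).ne'
  have hint : IntervalIntegrable (fun u => 1 / f u) volume y b :=
    (hinv.mono fun u hu => (lt_min hy hb).trans_le hu.1).intervalIntegrable
  rw [← one_div]
  refine (intervalIntegral.integral_hasDerivAt_left hint
    (hinv.stronglyMeasurableAtFilter isOpen_Ioi y hy)
    (hinv.continuousAt (Ioi_mem_nhds hy))).congr_of_eventuallyEq ?_
  filter_upwards [Ioi_mem_nhds hy] with z hz using hF z hz

theorem strictAntiOn (hF : IsReciprocalPrimitive f F) : StrictAntiOn F (Ioi 0) :=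
  strictAntiOn_of_hasDerivWithinAt_neg (convex_Ioi 0)
    (fun y hy => (hF.hasDerivAt y hy).continuousAt.continuousWithinAt)
    (fun y hy => (hF.hasDerivAt y (interior_subset hy)).hasDerivWithinAt)
    fun y hy => neg_lt_zero.2 (inv_pos.2 (hF.pos y (interior_subset hy)))

theorem tendsto_nhdsGT_zero_of_rightInverse {Finv : ℝ → ℝ} (hF : IsReciprocalPrimitive f F)
    (hFinv : ∀ᶠ t in atTop, 0 < Finv t ∧ F (Finv t) = t) : Tendsto Finv atTop (𝓝[>] 0) := by
  refine tendsto_nhdsWithin_iff.2 ⟨tendsto_order.2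
    ⟨fun m hm => hFinv.mono fun t ht => hm.trans ht.1, fun m hm => ?_⟩,
    hFinv.mono fun t ht => ht.1⟩
  filter_upwards [hFinv, eventually_gt_atTop (F m)] with t ⟨hpos, hFt⟩ ht
  exact (hF.strictAntiOn.lt_iff_gt hm hpos).1 (ht.trans_eq hFt.symm)

theorem rvat0 (hF : IsReciprocalPrimitive f F) (hf : RVat0 f β) : RVat0 F (1 - β) := by
  intro μ hμ
  have hderiv : ∀ᶠ y in 𝓝[>] 0, HasDerivAt (fun y => F (μ * y)) (-(f (μ * y))⁻¹ * μ) y := by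
    filter_upwards [self_mem_nhdsWithin] with y hy
    exact (hF.hasDerivAt (μ * y) (mul_pos hμ hy)).comp y
      (by simpa using (hasDerivAt_id y).const_mul μ)
  refine tendsto_div_of_tendsto_deriv_div_of_tendsto_atTop hderiv
    (eventually_mem_nhdsWithin.mono hF.hasDerivAt)
    (eventually_mem_nhdsWithin.mono fun y hy => neg_lt_zero.2 (inv_pos.2 (hF.pos y hy)))
    hF.tendsto_atTop ?_
  have hlim := ((hf μ hμ).inv₀ (by positivity)).const_mul μ
  have hexp : μ * (μ ^ β)⁻¹ = μ ^ (1 - β) := by rw [rpow_sub hμ, rpow_one, div_eq_mul_inv]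
  rw [hexp] at hlim
  refine hlim.congr fun y => ?_
  rw [neg_mul, neg_div_neg_eq, inv_div, div_inv_eq_mul, div_eq_mul_inv]
  ring

-- The test point is `μ y` with `μ ^ (1 - β)` just below `lam`: by regular variation of `F` it
-- bounds `x` from above, and `f (μ y) ~ μ ^ β f y`, `μ ^ (-β)` just below `lam ^ (β / (β - 1))`.
theorem eventually_forall_mul_le_of_mul_le (hF : IsReciprocalPrimitive f F)
    (hcont : ContinuousOn f (Ioi 0)) (hf : RVat0 f β) (hβ : 1 < β) (hlam : 0 < lam) (hD : 0 < D)
    (hDlam : D < lam ^ (β / (β - 1))) :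
    ∀ᶠ y in 𝓝[>] 0, ∀ x > 0, lam * F y ≤ F x → D * f x ≤ f y := by
  have hβ₀ : 0 < β := one_pos.trans hβ
  have hβ₁ : 0 < β - 1 := sub_pos.2 hβ
  obtain ⟨E, hDE, hElam⟩ := exists_between hDlam
  have hE : 0 < E := hD.trans hDE
  set μ := E ^ (-β⁻¹)
  have hμ : 0 < μ := rpow_pos_of_pos hE _
  have hμ_f : μ ^ β < D⁻¹ := by
    rw [← rpow_mul hE.le, neg_mul, inv_mul_cancel₀ hβ₀.ne', rpow_neg_one]
    exact (inv_lt_inv₀ hE hD).2 hDE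
  have hμ_F : μ ^ (1 - β) < lam := by
    calc μ ^ (1 - β) = E ^ ((β - 1) / β) := by
          rw [← rpow_mul hE.le]
          congr 1
          ring
      _ < (lam ^ (β / (β - 1))) ^ ((β - 1) / β) := rpow_lt_rpow hE.le hElam (by positivity)
      _ = lam := by
          rw [← rpow_mul hlam.le, div_mul_div_cancel₀ hβ₁.ne', div_self hβ₀.ne', rpow_one]
  filter_upwards [hf.eventually_forall_le_mul hcont hF.pos hβ₀ hμ hμ_f,
    (hF.rvat0 hf μ hμ).eventually_lt_const hμ_F, hF.tendsto_atTop.eventually_gt_atTop 0,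
    self_mem_nhdsWithin] with y hf_le hF_ratio hFy hy x hx hFx
  have hF_lt : F (μ * y) < F x := ((div_lt_iff₀ hFy).1 hF_ratio).trans_le hFx
  have hx_lt : x < μ * y := (hF.strictAntiOn.lt_iff_gt (mul_pos hμ hy) hx).1 hF_lt
  exact (le_inv_mul_iff₀ hD).1 (hf_le x ⟨hx, hx_lt.le⟩)

theorem eventually_forall_le_mul_of_le_mul (hF : IsReciprocalPrimitive f F)
    (hcont : ContinuousOn f (Ioi 0)) (hf : RVat0 f β) (hβ : 1 < β) (hlam : 0 < lam)
    (hDlam : lam ^ (β / (β - 1)) < D) :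
    ∀ᶠ x in 𝓝[>] 0, ∀ y > 0, F x ≤ lam * F y → f y ≤ D * f x := by
  have hD : 0 < D := (rpow_pos_of_pos hlam _).trans hDlam
  have hDinv : D⁻¹ < lam⁻¹ ^ (β / (β - 1)) := by
    rw [inv_rpow hlam.le]
    exact (inv_lt_inv₀ hD (rpow_pos_of_pos hlam _)).2 hDlam
  filter_upwards [hF.eventually_forall_mul_le_of_mul_le hcont hf hβ (inv_pos.2 hlam)
    (inv_pos.2 hD) hDinv] with x hx y hy hFxy
  exact (inv_mul_le_iff₀ hD).1 (hx y hy ((inv_mul_le_iff₀ hlam).2 hFxy))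

end IsReciprocalPrimitive

end Primitive

section CharacteristicEquation

variable {L γ : ℝ}

theorem strictMonoOn_add_mul_rpow (hL : 0 ≤ L) (hγ : 0 ≤ γ) :
    StrictMonoOn (fun s : ℝ => s + L * s ^ γ) (Ici 0) := fun _ hs _ _ hst =>
  add_lt_add_of_lt_of_le hst
    (mul_le_mul_of_nonneg_left (rpow_le_rpow (mem_Ici.1 hs) hst.le hγ) hL)

theorem exists_mem_Ioo_add_mul_rpow_eq_one (hL : 0 < L) (hγ : 0 < γ) :
    ∃ Λ ∈ Ioo (0 : ℝ) 1, Λ + L * Λ ^ γ = 1 := by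
  have hcont : ContinuousOn (fun s : ℝ => s + L * s ^ γ) (Icc 0 1) :=
    continuousOn_id.add (continuousOn_const.mul (continuous_rpow_const hγ.le).continuousOn)
  exact intermediate_value_Ioo zero_le_one hcont ⟨by simp [zero_rpow hγ.ne'], by simpa using hL⟩

theorem one_sub_mul_rpow_neg_eq_iff {Λ : ℝ} (hΛ : 0 < Λ) :
    (1 - Λ) * Λ ^ (-γ) = L ↔ Λ + L * Λ ^ γ = 1 := by
  rw [rpow_neg hΛ.le, ← div_eq_mul_inv, div_eq_iff (rpow_pos_of_pos hΛ γ).ne', sub_eq_iff_eq_add',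
    eq_comm]

end CharacteristicEquation

section Dynamics

/-- `x` eventually solves `x' = -f(x) + g` and tends to `0` through positive values; the asymptotic
results depend on the solution only in this way. -/
structure IsDecayingSol (f g x : ℝ → ℝ) : Prop where
  tendsto : Tendsto x atTop (𝓝[>] 0)
  hasDerivAt : ∀ᶠ t in atTop, HasDerivAt x (-f (x t) + g t) t

theorem IsSol.pos {f g x : ℝ → ℝ} {ξ : ℝ} (hx : IsSol f g ξ x) (hξ : 0 < ξ) (hf_zero : f 0 = 0)
    (hg_pos : ∀ t > 0, 0 < g t) {t : ℝ} (ht : 0 < t) : 0 < x t := by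
  obtain ⟨hcont, hx₀, hderiv⟩ := hx
  have hx_start : Tendsto x (𝓝[>] 0) (𝓝 ξ) := by
    have := (hcont 0 self_mem_Ici).mono Ioi_subset_Ici_self
    rwa [ContinuousWithinAt, hx₀] at this
  obtain ⟨t₀, hxt₀, ht₀, ht₀t⟩ :=
    ((hx_start.eventually_const_lt hξ).and (Ioc_mem_nhdsGT ht)).exists
  have hneg := forall_ge_neg_of_deriv_neg_of_eq_zero (v := -x)
    (fun s hs => (hderiv s (ht₀.trans_le hs)).neg) (neg_lt_zero.2 hxt₀) (fun s hs hxs => by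
      rw [neg_eq_zero.1 hxs, hf_zero, neg_zero, zero_add, neg_lt_zero]
      exact hg_pos s (ht₀.trans_le hs)) t ht₀t
  exact neg_lt_zero.1 hneg

theorem IsSol.isDecayingSol {f g x : ℝ → ℝ} {ξ : ℝ} (hx : IsSol f g ξ x) (hξ : 0 < ξ)
    (hf_zero : f 0 = 0) (hg_pos : ∀ t > 0, 0 < g t) (hx_zero : Tendsto x atTop (𝓝 0)) :
    IsDecayingSol f g x where
  tendsto := tendsto_nhdsWithin_iff.2 ⟨hx_zero,
    (eventually_gt_atTop 0).mono fun _ ht => hx.pos hξ hf_zero hg_pos ht⟩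
  hasDerivAt := (eventually_gt_atTop 0).mono hx.2.2

namespace IsDecayingSol

variable {f g F Finv x : ℝ → ℝ} {β : ℝ}

theorem hasDerivAt_primitive (hx : IsDecayingSol f g x) (hF : IsReciprocalPrimitive f F) :
    ∀ᶠ t in atTop, HasDerivAt (fun s => F (x s)) (1 - g t / f (x t)) t := by
  filter_upwards [hx.hasDerivAt, hx.tendsto.eventually self_mem_nhdsWithin] with t ht hxt
  refine ((hF.hasDerivAt (x t) hxt).comp t ht).congr_deriv ?_
  have := (hF.pos (x t) hxt).ne'
  field_simp
  ring

section Comparison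

variable {lam ℓ D : ℝ} (hx : IsDecayingSol f g x) (hF : IsReciprocalPrimitive f F)
  (hcont : ContinuousOn f (Ioi 0)) (hf : RVat0 f β) (hβ : 1 < β)
  (hg : ∀ᶠ t in atTop, 0 < g t) (hFinv : ∀ᶠ t in atTop, 0 < Finv t ∧ F (Finv t) = t)
include hx hF hcont hf hβ hg hFinv

theorem eventually_mul_le_div_of_mul_le (hℓ : ∀ᶠ t in atTop, ℓ ≤ g t / f (Finv t))
    (hlam : 0 < lam) (hD : 0 < D) (hDlam : D < lam ^ (β / (β - 1))) :
    ∀ᶠ t in atTop, lam * t ≤ F (x t) → ℓ * D ≤ g t / f (x t) := by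
  have hcompare := (hF.tendsto_nhdsGT_zero_of_rightInverse hFinv).eventually
    (hF.eventually_forall_mul_le_of_mul_le hcont hf hβ hlam hD hDlam)
  filter_upwards [hcompare, hℓ, hg, hFinv, hx.tendsto.eventually self_mem_nhdsWithin]
    with t hcmp hℓt hgt ⟨_, hFFinv⟩ hxt hFx
  have hfx : 0 < f (x t) := hF.pos _ hxt
  have hf_le : D * f (x t) ≤ f (Finv t) := hcmp (x t) hxt (by rwa [hFFinv])
  calc ℓ * D ≤ g t / f (Finv t) * D := by gcongr
    _ ≤ g t / (D * f (x t)) * D := by gcongr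
    _ = g t / f (x t) := by field_simp

theorem eventually_div_le_mul_of_le_mul (hℓ : ∀ᶠ t in atTop, g t / f (Finv t) ≤ ℓ)
    (hlam : 0 < lam) (hDlam : lam ^ (β / (β - 1)) < D) :
    ∀ᶠ t in atTop, F (x t) ≤ lam * t → g t / f (x t) ≤ ℓ * D := by
  have hD : 0 < D := (rpow_pos_of_pos hlam _).trans hDlam
  have hcompare := hx.tendsto.eventually
    (hF.eventually_forall_le_mul_of_le_mul hcont hf hβ hlam hDlam)
  filter_upwards [hcompare, hℓ, hg, hFinv] with t hcmp hℓt hgt ⟨hFinv_pos, hFFinv⟩ hFx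
  have hfFinv : 0 < f (Finv t) := hF.pos _ hFinv_pos
  have hf_le : f (Finv t) ≤ D * f (x t) := hcmp (Finv t) hFinv_pos (by rwa [hFFinv])
  calc g t / f (x t) = g t / (D * f (x t)) * D := by field_simp
    _ ≤ g t / f (Finv t) * D := by gcongr
    _ ≤ ℓ * D := by gcongr

theorem eventually_primitive_lt_mul (hℓ : ∀ᶠ t in atTop, ℓ ≤ g t / f (Finv t)) (hlam : 0 < lam)
    (hlamℓ : 1 < lam + ℓ * lam ^ (β / (β - 1))) : ∀ᶠ t in atTop, F (x t) < lam * t := by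
  have hlim : Tendsto (fun D => lam + ℓ * D) (𝓝[<] (lam ^ (β / (β - 1))))
      (𝓝 (lam + ℓ * lam ^ (β / (β - 1)))) :=
    ((continuous_const_mul ℓ).const_add lam).continuousAt.mono_left nhdsWithin_le_nhds
  obtain ⟨D, hgap, hD, hDlam⟩ := ((hlim.eventually_const_lt hlamℓ).and
    (Ioo_mem_nhdsLT (rpow_pos_of_pos hlam _))).exists
  have hneg : ∀ᶠ t in atTop, F (x t) - lam * t < 0 := by
    refine eventually_neg_of_deriv_le_neg_of_nonneg (v' := fun t => 1 - g t / f (x t) - lam)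
      (sub_pos.2 hgap) ?_ ?_
    · filter_upwards [hx.hasDerivAt_primitive hF] with t ht
      exact ht.sub (by simpa using (hasDerivAt_id t).const_mul lam)
    · filter_upwards [hx.eventually_mul_le_div_of_mul_le hF hcont hf hβ hg hFinv hℓ hlam hD hDlam]
        with t ht hFx
      linarith [ht (sub_nonneg.1 hFx)]
  exact hneg.mono fun t ht => sub_neg.1 ht

theorem eventually_mul_lt_primitive (hℓ : ∀ᶠ t in atTop, g t / f (Finv t) ≤ ℓ) (hlam : 0 < lam)
    (hlamℓ : lam + ℓ * lam ^ (β / (β - 1)) < 1) : ∀ᶠ t in atTop, lam * t < F (x t) := by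
  have hlim : Tendsto (fun D => lam + ℓ * D) (𝓝[>] (lam ^ (β / (β - 1))))
      (𝓝 (lam + ℓ * lam ^ (β / (β - 1)))) :=
    ((continuous_const_mul ℓ).const_add lam).continuousAt.mono_left nhdsWithin_le_nhds
  obtain ⟨D, hgap, hDlam⟩ := ((hlim.eventually_lt_const hlamℓ).and self_mem_nhdsWithin).exists
  have hneg : ∀ᶠ t in atTop, lam * t - F (x t) < 0 := by
    refine eventually_neg_of_deriv_le_neg_of_nonneg (v' := fun t => lam - (1 - g t / f (x t)))
      (sub_pos.2 hgap) ?_ ?_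
    · filter_upwards [hx.hasDerivAt_primitive hF] with t ht
      exact HasDerivAt.sub (by simpa using (hasDerivAt_id t).const_mul lam) ht
    · filter_upwards [hx.eventually_div_le_mul_of_le_mul hF hcont hf hβ hg hFinv hℓ hlam hDlam]
        with t ht hFx
      linarith [ht (sub_nonneg.1 hFx)]
  exact hneg.mono fun t ht => sub_neg.1 ht

theorem tendsto_primitive_div {L Λ : ℝ} (hL : 0 ≤ L) (hΛ : 0 < Λ)
    (hΛL : Λ + L * Λ ^ (β / (β - 1)) = 1)
    (hlim : Tendsto (fun t => g t / f (Finv t)) atTop (𝓝 L)) :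
    Tendsto (fun t => F (x t) / t) atTop (𝓝 Λ) := by
  have hmono := strictMonoOn_add_mul_rpow hL (div_nonneg (one_pos.trans hβ).le (sub_pos.2 hβ).le)
  refine tendsto_order.2 ⟨fun a ha => ?_, fun a ha => ?_⟩
  · obtain ⟨lam, halam, hlamΛ⟩ := exists_between (max_lt ha hΛ)
    have hlam : 0 < lam := (le_max_right a 0).trans_lt halam
    have hroot : lam + L * lam ^ (β / (β - 1)) < 1 := (hmono hlam.le hΛ.le hlamΛ).trans_eq hΛL
    have hpow : 0 < lam ^ (β / (β - 1)) := rpow_pos_of_pos hlam _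
    obtain ⟨ℓ, hLℓ, hℓ⟩ := exists_between ((lt_div_iff₀ hpow).2 (lt_sub_iff_add_lt'.2 hroot))
    filter_upwards [eventually_gt_atTop 0, hx.eventually_mul_lt_primitive hF hcont hf hβ hg hFinv
      (hlim.eventually_le_const hLℓ) hlam (lt_sub_iff_add_lt'.1 ((lt_div_iff₀ hpow).1 hℓ))]
      with t ht hFx
    calc a < lam := (le_max_left a 0).trans_lt halam
      _ < F (x t) / t := (lt_div_iff₀ ht).2 hFx
  · obtain ⟨lam, hΛlam, hlama⟩ := exists_between ha
    have hlam : 0 < lam := hΛ.trans hΛlam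
    have hroot : 1 < lam + L * lam ^ (β / (β - 1)) :=
      hΛL.symm.trans_lt (hmono hΛ.le hlam.le hΛlam)
    have hpow : 0 < lam ^ (β / (β - 1)) := rpow_pos_of_pos hlam _
    obtain ⟨ℓ, hℓ, hℓL⟩ := exists_between ((div_lt_iff₀ hpow).2 (sub_lt_iff_lt_add'.2 hroot))
    filter_upwards [eventually_gt_atTop 0, hx.eventually_primitive_lt_mul hF hcont hf hβ hg hFinv
      (hlim.eventually_const_le hℓL) hlam (sub_lt_iff_lt_add'.1 ((div_lt_iff₀ hpow).1 hℓ))]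
      with t ht hFx
    exact ((div_lt_iff₀ ht).2 hFx).trans hlama

theorem tendsto_primitive_div_zero (hlim : Tendsto (fun t => g t / f (Finv t)) atTop atTop) :
    Tendsto (fun t => F (x t) / t) atTop (𝓝 0) := by
  have hF_pos := hx.tendsto.eventually (hF.tendsto_atTop.eventually_gt_atTop 0)
  refine tendsto_order.2 ⟨fun a ha => ?_, fun a ha => ?_⟩
  · filter_upwards [eventually_gt_atTop 0, hF_pos] with t ht hFx
    exact ha.trans (div_pos hFx ht)
  · have hpow : 0 < a ^ (β / (β - 1)) := rpow_pos_of_pos ha _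
    obtain ⟨ℓ, hℓ⟩ := exists_gt ((1 - a) / a ^ (β / (β - 1)))
    filter_upwards [eventually_gt_atTop 0, hx.eventually_primitive_lt_mul hF hcont hf hβ hg hFinv
      (hlim.eventually_ge_atTop ℓ) ha (sub_lt_iff_lt_add'.1 ((div_lt_iff₀ hpow).1 hℓ))]
      with t ht hFx
    exact (div_lt_iff₀ ht).2 hFx

end Comparison

section SlowOscillation

variable {K : ℝ} (hx : IsDecayingSol f g x) (hF : IsReciprocalPrimitive f F)
  (hf : IsAlmostIncreasingAtZero f) (hg : IsSlowlyOscillating g)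
  (hsub : Tendsto (fun t => F (x t) / t) atTop (𝓝 0))
include hx hF hf hg hsub

theorem eventually_comp_le_mul (hK : 1 < K) : ∀ᶠ t in atTop, f (x t) ≤ K * g t := by
  obtain ⟨η, hη, rfl⟩ : ∃ η > 1, η ^ 3 = K := exists_one_lt_pow_eq hK three_ne_zero
  have hη₀ : 0 < η := one_pos.trans hη
  obtain ⟨ρ, hρ, hosc⟩ := hg η hη
  have hslow := eventually_exists_mem_Icc_le_and_deriv_le (hx.hasDerivAt_primitive hF) hsub
    (sub_pos.2 (inv_lt_one_of_one_lt₀ hη)) hρ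
  have hx_pos := hx.tendsto.eventually self_mem_nhdsWithin
  filter_upwards [hslow, hosc, eventually_forall_ge_mul hρ.1 (hx.tendsto.eventually (hf η hη)),
    eventually_forall_ge_mul hρ.1 hx_pos, hx_pos] with t ⟨s, hs, hFs, hrate⟩ hgt hfs hxs hxt
  have hx_le : x t ≤ x s := (hF.strictAntiOn.le_iff_ge (hxs s hs.1) hxt).1 hFs
  have hratio : η⁻¹ ≤ g s / f (x s) := (sub_le_sub_iff_left 1).1 hrate
  have hf_le_g : f (x s) ≤ η * g s :=
    (inv_mul_le_iff₀ hη₀).1 ((le_div_iff₀ (hF.pos _ (hxs s hs.1))).1 hratio)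
  have hg_le : g s ≤ η * g t := (hgt s hs).1
  calc f (x t) ≤ η * f (x s) := hfs s hs.1 (x t) ⟨hxt, hx_le⟩
    _ ≤ η * (η * g s) := mul_le_mul_of_nonneg_left hf_le_g hη₀.le
    _ ≤ η * (η * (η * g t)) := by gcongr
    _ = η ^ 3 * g t := by ring

theorem eventually_le_mul_comp (hK : 1 < K) : ∀ᶠ t in atTop, g t ≤ K * f (x t) := by
  obtain ⟨η, hη, rfl⟩ : ∃ η > 1, η ^ 3 = K := exists_one_lt_pow_eq hK three_ne_zero
  have hη₀ : 0 < η := one_pos.trans hη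
  obtain ⟨ρ, hρ, hosc⟩ := hg η hη
  have hslow := eventually_exists_mem_Icc_le_and_deriv_le
    ((hx.hasDerivAt_primitive hF).mono fun t ht => ht.neg)
    (by simpa only [Pi.neg_apply, neg_div, neg_zero] using hsub.neg) (sub_pos.2 hη) hρ
  have hx_pos := hx.tendsto.eventually self_mem_nhdsWithin
  filter_upwards [hslow, hosc, hx.tendsto.eventually (hf η hη),
    eventually_forall_ge_mul hρ.1 hx_pos, hx_pos] with t ⟨s, hs, hFs, hrate⟩ hgt hft hxs hxt
  have hx_le : x s ≤ x t := (hF.strictAntiOn.le_iff_ge hxt (hxs s hs.1)).1 (neg_le_neg_iff.1 hFs)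
  have hg_le_f : g s ≤ η * f (x s) :=
    (div_le_iff₀ (hF.pos _ (hxs s hs.1))).1 (by linarith)
  have hf_le : f (x s) ≤ η * f (x t) := hft (x s) ⟨hxs s hs.1, hx_le⟩
  calc g t ≤ η * g s := (hgt s hs).2
    _ ≤ η * (η * f (x s)) := mul_le_mul_of_nonneg_left hg_le_f hη₀.le
    _ ≤ η * (η * (η * f (x t))) := by gcongr
    _ = η ^ 3 * f (x t) := by ring

theorem tendsto_comp_div (hg_pos : ∀ᶠ t in atTop, 0 < g t) :
    Tendsto (fun t => f (x t) / g t) atTop (𝓝 1) :=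
  tendsto_div_one_of_eventually_le_mul hg_pos
    (fun _ hK => hx.eventually_comp_le_mul hF hf hg hsub hK)
    fun _ hK => hx.eventually_le_mul_comp hF hf hg hsub hK

end SlowOscillation

end IsDecayingSol

end Dynamics

theorem stmt_8_general {f g F Finv x : ℝ → ℝ} {β : ℝ} (hx : IsDecayingSol f g x)
    (hF : IsReciprocalPrimitive f F) (hf_cont : ContinuousOn f (Ioi 0)) (hfRV : RVat0 f β)
    (hβ : 1 < β) (hg_pos : ∀ᶠ t in atTop, 0 < g t)
    (hFinv : ∀ᶠ t in atTop, 0 < Finv t ∧ F (Finv t) = t) :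
    (Tendsto (fun t => g t / f (Finv t)) atTop (𝓝 0) →
      Tendsto (fun t => F (x t) / t) atTop (𝓝 1)) ∧
    (∀ L : ℝ, 0 < L → Tendsto (fun t => g t / f (Finv t)) atTop (𝓝 L) →
      ∃ Λ ∈ Ioo (0 : ℝ) 1, (1 - Λ) * Λ ^ (-β / (β - 1)) = L ∧
        (∀ Λ' ∈ Ioo (0 : ℝ) 1, (1 - Λ') * Λ' ^ (-β / (β - 1)) = L → Λ' = Λ) ∧
        Tendsto (fun t => F (x t) / t) atTop (𝓝 Λ)) ∧
    (IsSlowlyOscillating g → Tendsto (fun t => g t / f (Finv t)) atTop atTop →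
      Tendsto (fun t => f (x t) / g t) atTop (𝓝 1)) := by
  have hβ₀ : 0 < β := one_pos.trans hβ
  have hγ : 0 < β / (β - 1) := div_pos hβ₀ (sub_pos.2 hβ)
  refine ⟨fun hlim => ?_, fun L hL hlim => ?_, fun hg_osc hlim => ?_⟩
  · exact hx.tendsto_primitive_div hF hf_cont hfRV hβ hg_pos hFinv le_rfl one_pos (by simp) hlim
  · obtain ⟨Λ, hΛ, hΛL⟩ := exists_mem_Ioo_add_mul_rpow_eq_one hL hγ
    rw [neg_div]
    refine ⟨Λ, hΛ, (one_sub_mul_rpow_neg_eq_iff hΛ.1).2 hΛL, fun Λ' hΛ' hΛ'L => ?_,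
      hx.tendsto_primitive_div hF hf_cont hfRV hβ hg_pos hFinv hL.le hΛ.1 hΛL hlim⟩
    exact (strictMonoOn_add_mul_rpow hL.le hγ.le).injOn hΛ'.1.le hΛ.1.le
      (((one_sub_mul_rpow_neg_eq_iff hΛ'.1).1 hΛ'L).trans hΛL.symm)
  · exact hx.tendsto_comp_div hF (hfRV.isAlmostIncreasingAtZero hf_cont hF.pos hβ₀) hg_osc
      (hx.tendsto_primitive_div_zero hF hf_cont hfRV hβ hg_pos hFinv hlim) hg_pos

/-- Theorem 2.7 (Theorem `overall`): under the base hypotheses, with `f ∈ RV₀(β)` for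
some `β > 1` and `g ∈ RV_∞(-θ)` for some `θ > 0`, assume the solution `x` of
`x' = -f(x) + g`, `x(0) = ξ > 0`, satisfies `x(t) → 0`.  If
`g(t)/(f∘F⁻¹)(t) → L ∈ [0,∞]` then: (i) if `L = 0`, `F(x(t))/t → 1`;
(ii) if `L ∈ (0,∞)`, `F(x(t))/t → Λ*`, where `Λ* ∈ (0,1)` is the unique root of
`(1-Λ*)Λ*^(-β/(β-1)) = L`; (iii) if `L = ∞`, `f(x(t))/g(t) → 1`. -/
theorem stmt_8
    (f g F Finv : ℝ → ℝ) (ξ : ℝ) (x : ℝ → ℝ)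
    (hf_cont : Continuous f) (hf_lip : LocallyLipschitz f)
    (hf_sign : ∀ y : ℝ, y ≠ 0 → 0 < y * f y) (hf_zero : f 0 = 0)
    (hg_cont : ContinuousOn g (Set.Ici 0)) (hg_pos : ∀ t : ℝ, 0 < t → 0 < g t)
    (hF : ∀ y : ℝ, 0 < y → F y = ∫ u in y..(1:ℝ), 1 / f u)
    (hF_top : Tendsto F (nhdsWithin 0 (Set.Ioi 0)) atTop)
    (hF_anti : StrictAntiOn F (Set.Ioi 0))
    (hFinv : ∀ t : ℝ, 0 ≤ t → 0 < Finv t ∧ F (Finv t) = t)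
    (hFinv_to0 : Tendsto Finv atTop (nhds 0))
    (hξ : 0 < ξ) (hx : IsSol f g ξ x)
    (β : ℝ) (hβ : 1 < β) (hfRV : RVat0 f β)
    (θ : ℝ) (hθ : 0 < θ) (hgRV : RVatInf g (-θ))
    (hx_to0 : Tendsto x atTop (nhds 0)) :
    (Tendsto (fun t => g t / f (Finv t)) atTop (nhds 0) →
      Tendsto (fun t => F (x t) / t) atTop (nhds 1)) ∧
    (∀ L : ℝ, 0 < L → Tendsto (fun t => g t / f (Finv t)) atTop (nhds L) →
      ∃ Λ : ℝ, Λ ∈ Set.Ioo (0:ℝ) 1 ∧ (1 - Λ) * Λ ^ (-β / (β - 1)) = L ∧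
        (∀ Λ' ∈ Set.Ioo (0:ℝ) 1, (1 - Λ') * Λ' ^ (-β / (β - 1)) = L → Λ' = Λ) ∧
        Tendsto (fun t => F (x t) / t) atTop (nhds Λ)) ∧
    (Tendsto (fun t => g t / f (Finv t)) atTop atTop →
      Tendsto (fun t => f (x t) / g t) atTop (nhds 1)) := by
  have hf_pos : ∀ y > 0, 0 < f y := fun y hy => (mul_pos_iff_of_pos_left hy).1 (hf_sign y hy.ne')
  obtain ⟨hzero, hfinite, htop⟩ := stmt_8_general (hx.isDecayingSol hξ hf_zero hg_pos hx_to0)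
    (.of_intervalIntegral one_pos hf_cont.continuousOn hf_pos hF hF_top) hf_cont.continuousOn
    hfRV hβ ((eventually_gt_atTop 0).mono hg_pos) ((eventually_ge_atTop 0).mono hFinv)
  exact ⟨hzero, hfinite, htop (hgRV.isSlowlyOscillating (hg_cont.mono Ioi_subset_Ici_self) hg_pos)⟩
end
end

section
/- Assume the base hypotheses and Condition (M), suppose f ∈ RV₀(β) for some β > 1, and suppose there exists L > 0 such that lim_{t→∞} g(t)/(f∘F⁻¹)(t) = L. Let Λ* ∈ (0,1) be the unique solution of (1 - Λ*)·Λ*^{-β/(β-1)} = L, and let x be the unique continuous solution of x'(t) = -f(x(t)) + g(t), x(0) = ξ > 0. Then lim_{t→∞} x(t)/F⁻¹(t) = Λ*^{-1/(β-1)} > 1; in particular x decays at the same regularly varying order as, but strictly more slowly than, the solution y of the unperturbed equation y' = -f(y), for which y(t)/F⁻¹(t) → 1. -/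
open Filter Real Set Topology MeasureTheory

noncomputable section

/-!
Put `T u = ∫ v in u..1, 1 / f v`, so that `T (x t)` grows at rate `1 - g t / f (x t)` along
`x' = -f x + g`. If `y' = -f y`, as for `y = F⁻¹`, then `lam * y` solves the same equation with
forcing `f (lam * y) - lam * f y`, and regular variation gives
`(f (lam * y) - lam * f y) / f (lam * y) → 1 - lam ^ (1 - β)`, while
`g / f (lam * y) → L * lam ^ (-β)`. Since `f` is almost monotone near `0`, once `x` is on the wrong
side of `lam * y` the difference `T (x t) - T (lam * y t)` moves back to `0` at a rate bounded away
from `0`; the wrong side is above when `lam ^ β - lam > L` and below when `lam ^ β - lam < L`.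
As `s ↦ s ^ β - s` crosses `L` exactly at `μ = Λ ^ (-1 / (β - 1))`, the ratio `x / y` is squeezed
to `μ`.
-/

section DerivativeBounds

variable {E E' : ℝ → ℝ}

lemma tendsto_atTop_of_eventually_le_deriv {η : ℝ} (hη : 0 < η)
    (hE : ∀ᶠ t in atTop, HasDerivAt E (E' t) t) (hE' : ∀ᶠ t in atTop, η ≤ E' t) :
    Tendsto E atTop atTop := by
  obtain ⟨T, hT⟩ := eventually_atTop.1 (hE.and hE')
  have linear_bound : ∀ t, T ≤ t → E T + η * (t - T) ≤ E t := by
    intro t ht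
    have := (convex_Icc T t).mul_sub_le_image_sub_of_le_deriv (f := E) (C := η)
      (fun s hs => (hT s hs.1).1.continuousAt.continuousWithinAt)
      (fun s hs => (hT s (interior_subset hs).1).1.differentiableAt.differentiableWithinAt)
      (fun s hs => (hT s (interior_subset hs).1).1.deriv ▸ (hT s (interior_subset hs).1).2)
      T (left_mem_Icc.2 ht) t (right_mem_Icc.2 ht) ht
    linarith
  have linear_atTop : Tendsto (fun t => E T + η * (t - T)) atTop atTop :=
    tendsto_atTop_add_const_left _ _
      ((tendsto_atTop_add_const_right _ (-T) tendsto_id).const_mul_atTop hη)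
  exact tendsto_atTop_mono' _ ((eventually_ge_atTop T).mono linear_bound) linear_atTop

lemma eventually_nonneg_of_le_deriv_of_nonpos {η : ℝ} (hη : 0 < η)
    (hE : ∀ᶠ t in atTop, HasDerivAt E (E' t) t)
    (hE' : ∀ᶠ t in atTop, E t ≤ 0 → η ≤ E' t) : ∀ᶠ t in atTop, 0 ≤ E t := by
  have frequently_nonneg : ∃ᶠ t in atTop, 0 ≤ E t := fun eventually_neg => by
    have E_atTop := tendsto_atTop_of_eventually_le_deriv hη hE <| by
      filter_upwards [hE', eventually_neg] with t h hneg using h (not_le.1 hneg).le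
    obtain ⟨t, hneg, hnonneg⟩ := (eventually_neg.and (E_atTop.eventually_ge_atTop 0)).exists
    exact hneg hnonneg
  obtain ⟨T, hT⟩ := eventually_atTop.1 (hE.and hE')
  obtain ⟨t₁, hTt₁, ht₁⟩ := frequently_atTop.1 frequently_nonneg T
  filter_upwards [eventually_ge_atTop t₁] with t ht
  have neg_le_zero := image_le_of_deriv_right_lt_deriv_boundary
    (f := fun s => -E s) (f' := fun s => -E' s) (a := t₁) (b := t) (B := fun _ => 0)
    (fun s hs => (hT s (hTt₁.trans hs.1)).1.continuousAt.neg.continuousWithinAt)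
    (fun s hs => (hT s (hTt₁.trans hs.1)).1.neg.hasDerivWithinAt)
    (neg_nonpos.2 ht₁) (fun s => hasDerivAt_const s 0)
    (fun s hs hs0 => neg_lt_zero.2
      (hη.trans_le ((hT s (hTt₁.trans hs.1)).2 (neg_eq_zero.1 hs0).le)))
  exact neg_nonpos.1 (neg_le_zero (right_mem_Icc.2 ht))

lemma exists_tendsto_of_eventually_deriv_nonpos {b : ℝ}
    (hE : ∀ᶠ t in atTop, HasDerivAt E (E' t) t) (hE' : ∀ᶠ t in atTop, E' t ≤ 0)
    (hb : ∀ᶠ t in atTop, b ≤ E t) : ∃ l, Tendsto E atTop (𝓝 l) := by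
  obtain ⟨T, hT⟩ := eventually_atTop.1 (hE.and (hE'.and hb))
  have antitoneOn_E : AntitoneOn E (Ici T) :=
    antitoneOn_of_hasDerivWithinAt_nonpos (convex_Ici T)
      (fun s hs => (hT s hs).1.continuousAt.continuousWithinAt)
      (fun s hs => (hT s (interior_subset hs)).1.hasDerivWithinAt)
      (fun s hs => (hT s (interior_subset hs)).2.1)
  have antitone_E : Antitone fun t => E (max T t) := fun s t hst =>
    antitoneOn_E (le_max_left T s) (le_max_left T t) (max_le_max_left T hst)
  have bddBelow_E : BddBelow (range fun t => E (max T t)) :=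
    ⟨b, forall_mem_range.2 fun t => (hT _ (le_max_left T t)).2.2⟩
  refine ⟨_, (tendsto_atTop_ciInf antitone_E bddBelow_E).congr' ?_⟩
  filter_upwards [eventually_ge_atTop T] with t ht
  rw [max_eq_right ht]

end DerivativeBounds

/-- `f` is almost increasing near `0⁺`: for every `κ > 1` one has `f a ≤ κ * f b` whenever
`0 < a ≤ b` and `b` is small. This is what Condition (M) provides for the comparison of solutions,
without mention of the monotone function to which `f` is asymptotic. -/
def AlmostMonotoneAt0 (f : ℝ → ℝ) : Prop :=
  ∀ κ : ℝ, 1 < κ → ∀ᶠ b in 𝓝[>] 0, ∀ a ∈ Ioc 0 b, f a ≤ κ * f b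

lemma almostMonotoneAt0_of_tendsto_div {f φ : ℝ → ℝ} {δ : ℝ} (hδ : 0 < δ)
    (hpos : ∀ u, 0 < u → 0 < f u) (hφ : MonotoneOn φ (Ioo 0 δ))
    (hfφ : Tendsto (fun u => f u / φ u) (𝓝[>] 0) (𝓝 1)) : AlmostMonotoneAt0 f := by
  intro κ hκ
  have one_lt_sqrt : 1 < √κ := Real.lt_sqrt_of_sq_lt (by simpa using hκ)
  have sqrt_pos : 0 < √κ := one_pos.trans one_lt_sqrt
  have near_zero : ∀ᶠ u in 𝓝[>] 0, u ∈ Ioo 0 δ ∧ f u ≤ √κ * φ u ∧ φ u ≤ √κ * f u := by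
    filter_upwards [Ioo_mem_nhdsGT hδ, hfφ.eventually_lt_const one_lt_sqrt,
      hfφ.eventually_const_lt (inv_lt_one_of_one_lt₀ one_lt_sqrt)] with u hu hlt hgt
    have φ_pos : 0 < φ u :=
      (div_pos_iff_of_pos_left (hpos u hu.1)).1 ((inv_pos.2 sqrt_pos).trans hgt)
    rw [lt_div_iff₀ φ_pos, inv_mul_lt_iff₀ sqrt_pos] at hgt
    exact ⟨hu, ((div_lt_iff₀ φ_pos).1 hlt).le, hgt.le⟩
  obtain ⟨r, hr, near⟩ := mem_nhdsGT_iff_exists_Ioo_subset.1 near_zero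
  filter_upwards [Ioo_mem_nhdsGT hr] with b hb a ha
  obtain ⟨ha_mem, f_le, -⟩ := near ⟨ha.1, ha.2.trans_lt hb.2⟩
  obtain ⟨hb_mem, -, le_f⟩ := near hb
  calc f a ≤ √κ * φ a := f_le
    _ ≤ √κ * (√κ * f b) := by gcongr; exact (hφ ha_mem hb_mem ha.2).trans le_f
    _ = κ * f b := by rw [← mul_assoc, Real.mul_self_sqrt (by linarith)]

/-- The function `F` of the paper: the time that the flow of `y' = -f y` takes from `u` to `1`
(negative for `1 < u`). -/
def transitTime (f : ℝ → ℝ) (u : ℝ) : ℝ := ∫ v in u..(1 : ℝ), 1 / f v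

/-- From some time on, `x` is a positive solution of `x' = -f x + g`. The comparison arguments
concern `t → ∞`, so no initial condition is recorded; forcing `0` gives the unperturbed equation. -/
def EventuallyPosSol (f g x : ℝ → ℝ) : Prop :=
  ∀ᶠ t in atTop, 0 < x t ∧ HasDerivAt x (-f (x t) + g t) t

section Solutions

variable {f : ℝ → ℝ} (hf : ContinuousOn f (Ioi 0)) (hpos : ∀ u, 0 < u → 0 < f u)

include hf hpos

lemma hasStrictDerivAt_transitTime {u : ℝ} (hu : 0 < u) :
    HasStrictDerivAt (transitTime f) (-(1 / f u)) u := by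
  have continuousOn_inv : ContinuousOn (fun v => 1 / f v) (Ioi 0) :=
    continuousOn_const.div hf fun v hv => (hpos v hv).ne'
  have uIcc_subset : uIcc u 1 ⊆ Ioi 0 := fun v hv => (lt_min hu one_pos).trans_le hv.1
  exact intervalIntegral.integral_hasStrictDerivAt_left
    (continuousOn_inv.mono uIcc_subset).intervalIntegrable
    (continuousOn_inv.stronglyMeasurableAtFilter isOpen_Ioi u hu)
    (continuousOn_inv.continuousAt (Ioi_mem_nhds hu))

lemma strictAntiOn_transitTime : StrictAntiOn (transitTime f) (Ioi 0) := by
  refine strictAntiOn_of_hasDerivWithinAt_neg (f' := fun u => -(1 / f u)) (convex_Ioi 0)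
    (fun u hu => ?_) (fun u hu => ?_) (fun u hu => ?_)
  · exact (hasStrictDerivAt_transitTime hf hpos hu).hasDerivAt.continuousAt.continuousWithinAt
  · exact (hasStrictDerivAt_transitTime hf hpos (interior_subset hu)).hasDerivAt.hasDerivWithinAt
  · exact neg_neg_of_pos (one_div_pos.2 (hpos u (interior_subset hu)))

section Inverse

variable {Tinv : ℝ → ℝ} (hTinv : ∀ t, 0 ≤ t → 0 < Tinv t ∧ transitTime f (Tinv t) = t)

include hTinv

lemma tendsto_transitTime_inverse : Tendsto Tinv atTop (𝓝[>] 0) := by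
  have eventually_pos : ∀ᶠ t in atTop, 0 < Tinv t :=
    (eventually_ge_atTop 0).mono fun t ht => (hTinv t ht).1
  refine tendsto_nhdsWithin_iff.2 ⟨tendsto_order.2 ⟨fun a ha => ?_, fun ε hε => ?_⟩, eventually_pos⟩
  · exact eventually_pos.mono fun t ht => ha.trans ht
  · filter_upwards [eventually_ge_atTop 0, eventually_gt_atTop (transitTime f ε)] with t ht htε
    rw [← (hTinv t ht).2] at htε
    exact ((strictAntiOn_transitTime hf hpos).lt_iff_gt hε (hTinv t ht).1).1 htε

lemma hasDerivAt_transitTime_inverse {t : ℝ} (ht : 0 < t) :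
    HasDerivAt Tinv (-f (Tinv t)) t := by
  obtain ⟨inv_pos, time_inv⟩ := hTinv t ht.le
  have deriv_time := hasStrictDerivAt_transitTime hf hpos inv_pos
  have left_inverse : ∀ᶠ u in 𝓝 (Tinv t), Tinv (transitTime f u) = u := by
    filter_upwards [Ioi_mem_nhds inv_pos,
      deriv_time.hasDerivAt.continuousAt.eventually_const_lt (time_inv.symm ▸ ht)] with u hu hTu
    obtain ⟨hpos', heq⟩ := hTinv _ hTu.le
    exact (strictAntiOn_transitTime hf hpos).injOn hpos' hu heq
  have deriv_ne : -(1 / f (Tinv t)) ≠ 0 := neg_ne_zero.2 (one_div_pos.2 (hpos _ inv_pos)).ne'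
  have := (deriv_time.to_local_left_inverse deriv_ne left_inverse).hasDerivAt
  rw [time_inv] at this
  exact this.congr_deriv (by rw [← neg_inv, one_div, inv_inv])

lemma eventuallyPosSol_transitTime_inverse : EventuallyPosSol f 0 Tinv := by
  filter_upwards [eventually_gt_atTop 0] with t ht
  simpa using ⟨(hTinv t ht.le).1, hasDerivAt_transitTime_inverse hf hpos hTinv ht⟩

end Inverse

lemma EventuallyPosSol.hasDerivAt_transitTime_comp {g x : ℝ → ℝ} (hx : EventuallyPosSol f g x) :
    ∀ᶠ t in atTop, HasDerivAt (fun s => transitTime f (x s)) (1 - g t / f (x t)) t := by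
  filter_upwards [hx] with t ⟨x_pos, deriv_x⟩
  have f_ne : f (x t) ≠ 0 := (hpos _ x_pos).ne'
  refine ((hasStrictDerivAt_transitTime hf hpos x_pos).hasDerivAt.comp t deriv_x).congr_deriv ?_
  field_simp
  ring

theorem EventuallyPosSol.eventually_le {g h x z : ℝ → ℝ} {η : ℝ} (hx : EventuallyPosSol f g x)
    (hz : EventuallyPosSol f h z) (hη : 0 < η)
    (hgap : ∀ᶠ t in atTop, z t ≤ x t → g t / f (x t) + η ≤ h t / f (z t)) :
    ∀ᶠ t in atTop, x t ≤ z t := by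
  have time_le_iff : ∀ᶠ t in atTop, transitTime f (x t) ≤ transitTime f (z t) ↔ z t ≤ x t := by
    filter_upwards [hx, hz] with t hxt hzt
    exact (strictAntiOn_transitTime hf hpos).le_iff_ge hxt.1 hzt.1
  have deriv_diff : ∀ᶠ t in atTop,
      HasDerivAt (fun s => transitTime f (x s) - transitTime f (z s))
        (1 - g t / f (x t) - (1 - h t / f (z t))) t := by
    filter_upwards [hx.hasDerivAt_transitTime_comp hf hpos,
      hz.hasDerivAt_transitTime_comp hf hpos] with t hxt hzt using hxt.sub hzt
  have time_le : ∀ᶠ t in atTop, 0 ≤ transitTime f (x t) - transitTime f (z t) := by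
    refine eventually_nonneg_of_le_deriv_of_nonpos hη deriv_diff ?_
    filter_upwards [time_le_iff, hgap] with t hiff hgap_t hle
    linarith [hgap_t (hiff.1 (sub_nonpos.1 hle))]
  filter_upwards [time_le, hx, hz] with t hle hxt hzt
  exact ((strictAntiOn_transitTime hf hpos).le_iff_ge hzt.1 hxt.1).1 (sub_nonneg.1 hle)

theorem EventuallyPosSol.tendsto_nhdsGT_zero {g x y : ℝ → ℝ} {L : ℝ} (hx : EventuallyPosSol f g x)
    (hy : EventuallyPosSol f 0 y) (hy0 : Tendsto y atTop (𝓝 0))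
    (hL : Tendsto (fun t => g t / f (y t)) atTop (𝓝 L)) : Tendsto x atTop (𝓝[>] 0) := by
  obtain ⟨C, hC⟩ := exists_gt (max L 0)
  obtain ⟨hLC, hC0⟩ := max_lt_iff.1 hC
  -- The term `C * y` absorbs the forcing, which makes `x + C * y` a Lyapunov function.
  have deriv_W : ∀ᶠ t in atTop, HasDerivAt (fun s => x s + C * y s)
      (-f (x t) + g t + C * (-f (y t))) t := by
    filter_upwards [hx, hy] with t hxt hyt
    exact hxt.2.add ((hyt.2.congr_deriv (by simp)).const_mul C)
  have deriv_W_le : ∀ᶠ t in atTop, -f (x t) + g t + C * (-f (y t)) ≤ -f (x t) := by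
    filter_upwards [hL.eventually_lt_const hLC, hy] with t hlt hyt
    linarith [(div_lt_iff₀ (hpos _ hyt.1)).1 hlt]
  have W_nonneg : ∀ᶠ t in atTop, 0 ≤ x t + C * y t := by
    filter_upwards [hx, hy] with t hxt hyt
    exact add_nonneg hxt.1.le (mul_nonneg hC0.le hyt.1.le)
  obtain ⟨l, W_tendsto⟩ := exists_tendsto_of_eventually_deriv_nonpos deriv_W
    (by filter_upwards [deriv_W_le, hx] with t hle hxt using
      hle.trans (neg_nonpos.2 (hpos _ hxt.1).le)) W_nonneg
  have x_tendsto : Tendsto x atTop (𝓝 l) := by simpa using W_tendsto.sub (hy0.const_mul C)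
  have l_nonneg : 0 ≤ l := ge_of_tendsto x_tendsto (hx.mono fun t hxt => hxt.1.le)
  have l_eq_zero : l = 0 := by
    by_contra hl
    have l_pos : 0 < l := l_nonneg.lt_of_ne' hl
    have f_x_tendsto : Tendsto (fun t => f (x t)) atTop (𝓝 (f l)) :=
      (hf.continuousAt (Ioi_mem_nhds l_pos)).tendsto.comp x_tendsto
    have neg_W_atTop := tendsto_atTop_of_eventually_le_deriv (half_pos (hpos l l_pos))
      (deriv_W.mono fun t ht => ht.fun_neg) <| by
        filter_upwards [deriv_W_le, f_x_tendsto.eventually_const_lt (half_lt_self (hpos l l_pos))]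
          with t hle hlt
        linarith
    obtain ⟨t, hgt, hnonneg⟩ := ((neg_W_atTop.eventually_gt_atTop 0).and W_nonneg).exists
    linarith
  exact tendsto_nhdsWithin_iff.2 ⟨l_eq_zero ▸ x_tendsto, hx.mono fun t hxt => hxt.1⟩

end Solutions

lemma EventuallyPosSol.const_mul {f y : ℝ → ℝ} {lam : ℝ} (hlam : 0 < lam)
    (hy : EventuallyPosSol f 0 y) :
    EventuallyPosSol f (fun t => f (lam * y t) - lam * f (y t)) (fun t => lam * y t) := by
  filter_upwards [hy] with t ⟨y_pos, deriv_y⟩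
  exact ⟨mul_pos hlam y_pos, (deriv_y.const_mul lam).congr_deriv (by rw [Pi.zero_apply]; ring)⟩

lemma IsSol.eventuallyPosSol {f g x y : ℝ → ℝ} {ξ : ℝ} (hpos : ∀ u, 0 < u → 0 < f u)
    (hg : ∀ t, 0 < t → 0 ≤ g t) (hy : EventuallyPosSol f 0 y) (hy0 : Tendsto y atTop (𝓝 0))
    (hξ : 0 < ξ) (hx : IsSol f g ξ x) : EventuallyPosSol f g x := by
  obtain ⟨x_cont, x_zero, deriv_x⟩ := hx
  obtain ⟨s, hs⟩ := eventually_atTop.1 (hy.and (hy0.eventually_lt_const hξ))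
  filter_upwards [eventually_gt_atTop 0] with t ht
  refine ⟨?_, deriv_x t ht⟩
  have above_at_zero : ∀ᶠ a in 𝓝[>] 0, y s < x a :=
    ((x_cont 0 self_mem_Ici).mono Ioi_subset_Ici_self).eventually_const_lt
      (x_zero ▸ (hs s le_rfl).2)
  obtain ⟨a, above_at_a, a_pos, hat⟩ := (above_at_zero.and (Ioo_mem_nhdsGT ht)).exists
  -- `τ ↦ y (s + 2 * (τ - a))` runs down the flow of `-f` at double speed, so `x` cannot cross it.
  have s_le : ∀ τ, a ≤ τ → s ≤ s + 2 * (τ - a) := fun τ hτ => by linarith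
  have deriv_barrier : ∀ τ, a ≤ τ → HasDerivAt (fun τ => -y (s + 2 * (τ - a)))
      (2 * f (y (s + 2 * (τ - a)))) τ := by
    intro τ hτ
    have deriv_time : HasDerivAt (fun τ => s + 2 * (τ - a)) (2 * 1) τ :=
      (((hasDerivAt_id τ).sub_const a).const_mul 2).const_add s
    refine ((hs _ (s_le τ hτ)).1.2.comp τ deriv_time).neg.congr_deriv ?_
    simp only [Pi.zero_apply]
    ring
  have neg_x_le := image_le_of_deriv_right_lt_deriv_boundary' (a := a) (b := t)
    (fun τ hτ => (deriv_x τ (a_pos.trans_le hτ.1)).continuousAt.neg.continuousWithinAt)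
    (fun τ hτ => (deriv_x τ (a_pos.trans_le hτ.1)).neg.hasDerivWithinAt)
    (by simpa using above_at_a.le)
    (fun τ hτ => (deriv_barrier τ hτ.1).continuousAt.continuousWithinAt)
    (fun τ hτ => (deriv_barrier τ hτ.1).hasDerivWithinAt)
    (fun τ hτ heq => by
      have f_pos := hpos _ (hs _ (s_le τ hτ.1)).1.1
      have g_nonneg := hg τ (a_pos.trans_le hτ.1)
      rw [neg_injective heq]
      linarith)
    (right_mem_Icc.2 hat.le)
  exact (hs _ (s_le t hat.le)).1.1.trans_le (neg_le_neg_iff.1 neg_x_le)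

lemma rpow_sub_self_lt_rpow_sub_self {β s t : ℝ} (hβ : 1 < β) (hs : 0 < s) (ht : 1 ≤ t)
    (hst : s < t) : s ^ β - s < t ^ β - t := by
  have factor : ∀ r : ℝ, 0 < r → r ^ β - r = r * (r ^ (β - 1) - 1) := fun r hr => by
    rw [Real.rpow_sub_one hr.ne']
    field_simp
  have pow_lt : s ^ (β - 1) < t ^ (β - 1) := Real.rpow_lt_rpow hs.le hst (sub_pos.2 hβ)
  have one_le_pow : 1 ≤ t ^ (β - 1) := Real.one_le_rpow ht (sub_pos.2 hβ).le
  calc s ^ β - s = s * (s ^ (β - 1) - 1) := factor s hs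
    _ < s * (t ^ (β - 1) - 1) := by gcongr
    _ ≤ t * (t ^ (β - 1) - 1) := mul_le_mul_of_nonneg_right hst.le (sub_nonneg.2 one_le_pow)
    _ = t ^ β - t := (factor t (hs.trans hst)).symm

lemma rpow_neg_inv_rpow_sub_self {β Λ : ℝ} (hβ : β ≠ 1) (hΛ : 0 < Λ) :
    (Λ ^ (-1 / (β - 1))) ^ β - Λ ^ (-1 / (β - 1)) = (1 - Λ) * Λ ^ (-β / (β - 1)) := by
  have exponent : -1 / (β - 1) = 1 + -β / (β - 1) := by
    field_simp [sub_ne_zero.2 hβ]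
    ring
  have mul_rpow : Λ * Λ ^ (-β / (β - 1)) = Λ ^ (-1 / (β - 1)) := by
    rw [exponent, Real.rpow_add hΛ, Real.rpow_one]
  rw [← Real.rpow_mul hΛ.le, div_mul_eq_mul_div, neg_one_mul, sub_mul, one_mul, mul_rpow]

section Comparison

variable {f g x y : ℝ → ℝ} {β L lam : ℝ}

lemma RVat0.tendsto_comp_div (hRV : RVat0 f β) (hlam : 0 < lam) (hy0 : Tendsto y atTop (𝓝[>] 0)) :
    Tendsto (fun t => f (y t) / f (lam * y t)) atTop (𝓝 (lam ^ β)⁻¹) := by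
  simpa using ((hRV lam hlam).comp hy0).inv₀ (Real.rpow_pos_of_pos hlam β).ne'

lemma tendsto_forcing_div_comp_mul (hpos : ∀ u, 0 < u → 0 < f u) (hRV : RVat0 f β)
    (hy0 : Tendsto y atTop (𝓝[>] 0)) (hL : Tendsto (fun t => g t / f (y t)) atTop (𝓝 L))
    (hlam : 0 < lam) (κ : ℝ) :
    Tendsto (fun t => κ * (g t / f (lam * y t)) + lam * f (y t) / f (lam * y t)) atTop
      (𝓝 ((κ * L + lam) / lam ^ β)) := by
  refine (((hL.const_mul κ).add_const lam).mul (hRV.tendsto_comp_div hlam hy0)).congr' ?_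
  filter_upwards [hy0.eventually self_mem_nhdsWithin] with t ht
  have f_ne : f (y t) ≠ 0 := (hpos _ ht).ne'
  field_simp

variable (hf : ContinuousOn f (Ioi 0)) (hpos : ∀ u, 0 < u → 0 < f u) (hmono : AlmostMonotoneAt0 f)
  (hRV : RVat0 f β) (hg : ∀ᶠ t in atTop, 0 ≤ g t) (hx : EventuallyPosSol f g x)
  (hy : EventuallyPosSol f 0 y) (hy0 : Tendsto y atTop (𝓝[>] 0))
  (hL : Tendsto (fun t => g t / f (y t)) atTop (𝓝 L)) (hlam : 0 < lam)

include hf hpos hmono hRV hg hx hy hy0 hL hlam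

lemma eventually_le_const_mul (hgap : L < lam ^ β - lam) : ∀ᶠ t in atTop, x t ≤ lam * y t := by
  have x_tendsto := hx.tendsto_nhdsGT_zero hf hpos hy (hy0.mono_right nhdsWithin_le_nhds) hL
  have gap_near_one : ∀ᶠ κ in 𝓝[>] (1 : ℝ), κ * L + lam < lam ^ β :=
    (Continuous.tendsto' (by fun_prop) 1 (1 * L + lam) rfl).mono_left nhdsWithin_le_nhds
      |>.eventually_lt_const (by linarith)
  obtain ⟨κ, hκ, one_lt⟩ := (gap_near_one.and self_mem_nhdsWithin).exists
  obtain ⟨θ, hθ, θ_lt⟩ := exists_between ((div_lt_one (Real.rpow_pos_of_pos hlam β)).2 hκ)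
  refine hx.eventually_le hf hpos (hy.const_mul hlam) (sub_pos.2 θ_lt) ?_
  filter_upwards [x_tendsto.eventually (hmono κ one_lt), hy.const_mul hlam, hx, hg,
    (tendsto_forcing_div_comp_mul hpos hRV hy0 hL hlam κ).eventually_lt_const hθ]
    with t almost_mono hyt hxt g_nonneg hlt hle
  have f_pos := hpos _ hyt.1
  have forcing_le : g t / f (x t) ≤ κ * (g t / f (lam * y t)) := by
    rw [← mul_div_assoc, div_le_div_iff₀ (hpos _ hxt.1) f_pos]
    linarith [mul_le_mul_of_nonneg_left (almost_mono _ ⟨hyt.1, hle⟩) g_nonneg]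
  rw [sub_div, div_self f_pos.ne']
  linarith

lemma eventually_const_mul_le (hgap : lam ^ β - lam < L) : ∀ᶠ t in atTop, lam * y t ≤ x t := by
  have lam_y_tendsto : Tendsto (fun t => lam * y t) atTop (𝓝[>] 0) :=
    tendsto_nhdsWithin_iff.2 ⟨by simpa using (hy0.mono_right nhdsWithin_le_nhds).const_mul lam,
      (hy.const_mul hlam).mono fun t ht => ht.1⟩
  have gap_near_one : ∀ᶠ κ in 𝓝[<] (1 : ℝ), lam ^ β < κ * L + lam :=
    (Continuous.tendsto' (by fun_prop) 1 (1 * L + lam) rfl).mono_left nhdsWithin_le_nhds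
      |>.eventually_const_lt (by linarith)
  obtain ⟨κ, hκ, κ_pos, lt_one⟩ := (gap_near_one.and (Ioo_mem_nhdsLT one_pos)).exists
  obtain ⟨θ, lt_θ, hθ⟩ := exists_between ((one_lt_div (Real.rpow_pos_of_pos hlam β)).2 hκ)
  refine (hy.const_mul hlam).eventually_le hf hpos hx (sub_pos.2 lt_θ) ?_
  filter_upwards [lam_y_tendsto.eventually (hmono κ⁻¹ ((one_lt_inv₀ κ_pos).2 lt_one)),
    hy.const_mul hlam, hx, hg,
    (tendsto_forcing_div_comp_mul hpos hRV hy0 hL hlam κ).eventually_const_lt hθ]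
    with t almost_mono hyt hxt g_nonneg hlt hle
  have f_pos := hpos _ hyt.1
  have le_forcing : κ * (g t / f (lam * y t)) ≤ g t / f (x t) := by
    have f_le := (le_inv_mul_iff₀ κ_pos).1 (almost_mono _ ⟨hxt.1, hle⟩)
    rw [← mul_div_assoc, div_le_div_iff₀ f_pos (hpos _ hxt.1)]
    linarith [mul_le_mul_of_nonneg_left f_le g_nonneg]
  rw [sub_div, div_self f_pos.ne']
  linarith

omit hlam

theorem EventuallyPosSol.tendsto_div (hβ : 1 < β) {μ : ℝ} (hμ : 1 ≤ μ) (hμL : μ ^ β - μ = L) :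
    Tendsto (fun t => x t / y t) atTop (𝓝 μ) := by
  have μ_pos : 0 < μ := one_pos.trans_le hμ
  refine tendsto_order.2 ⟨fun a ha => ?_, fun a ha => ?_⟩
  · obtain ⟨lam, lt_lam, lam_lt⟩ := exists_between (max_lt ha μ_pos)
    obtain ⟨ha_lam, lam_pos⟩ := max_lt_iff.1 lt_lam
    filter_upwards [hy, eventually_const_mul_le hf hpos hmono hRV hg hx hy hy0 hL lam_pos
      (hμL ▸ rpow_sub_self_lt_rpow_sub_self hβ lam_pos hμ lam_lt)] with t hyt hle
    exact ha_lam.trans_le ((le_div_iff₀ hyt.1).2 hle)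
  · obtain ⟨lam, μ_lt, lam_lt⟩ := exists_between ha
    filter_upwards [hy, eventually_le_const_mul hf hpos hmono hRV hg hx hy hy0 hL
      (μ_pos.trans μ_lt)
      (hμL ▸ rpow_sub_self_lt_rpow_sub_self hβ μ_pos (hμ.trans μ_lt.le) μ_lt)] with t hyt hle
    exact ((div_le_iff₀ hyt.1).2 hle).trans_lt lam_lt

end Comparison

theorem stmt_11_general {f g Finv x : ℝ → ℝ} {ξ β L Λ : ℝ}
    (hf : ContinuousOn f (Ioi 0)) (hpos : ∀ u, 0 < u → 0 < f u) (hg : ∀ t, 0 < t → 0 ≤ g t)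
    (hFinv : ∀ t, 0 ≤ t → 0 < Finv t ∧ transitTime f (Finv t) = t)
    (hξ : 0 < ξ) (hx : IsSol f g ξ x) (hmono : AlmostMonotoneAt0 f)
    (hβ : 1 < β) (hRV : RVat0 f β) (hL : Tendsto (fun t => g t / f (Finv t)) atTop (𝓝 L))
    (hΛ : Λ ∈ Ioo 0 1) (hΛL : (1 - Λ) * Λ ^ (-β / (β - 1)) = L) :
    Tendsto (fun t => x t / Finv t) atTop (𝓝 (Λ ^ (-1 / (β - 1)))) ∧
    1 < Λ ^ (-1 / (β - 1)) ∧
    (∀ ζ : ℝ, 0 < ζ → ∀ y : ℝ → ℝ, IsSol f (fun _ => 0) ζ y →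
      Tendsto (fun t => y t / Finv t) atTop (𝓝 1)) := by
  have Finv_sol := eventuallyPosSol_transitTime_inverse hf hpos hFinv
  have Finv_tendsto := tendsto_transitTime_inverse hf hpos hFinv
  have Finv_zero := Finv_tendsto.mono_right nhdsWithin_le_nhds
  have one_lt_μ : 1 < Λ ^ (-1 / (β - 1)) := Real.one_lt_rpow_of_pos_of_lt_one_of_neg hΛ.1 hΛ.2
    (div_neg_of_neg_of_pos neg_one_lt_zero (sub_pos.2 hβ))
  refine ⟨?_, one_lt_μ, fun ζ hζ y hy => ?_⟩
  · exact (hx.eventuallyPosSol hpos hg Finv_sol Finv_zero hξ).tendsto_div hf hpos hmono hRV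
      ((eventually_gt_atTop 0).mono hg) Finv_sol Finv_tendsto hL hβ one_lt_μ.le
      ((rpow_neg_inv_rpow_sub_self hβ.ne' hΛ.1).trans hΛL)
  · exact (hy.eventuallyPosSol hpos (fun _ _ => le_rfl) Finv_sol Finv_zero hζ).tendsto_div hf hpos
      hmono hRV (.of_forall fun _ => le_rfl) Finv_sol Finv_tendsto (L := 0) (by simp) hβ le_rfl
      (by simp)

/-- Consequence of Theorem 2.3(i): under the base hypotheses and Condition (M), if
`f ∈ RV₀(β)` with `β > 1`, `g(t)/(f∘F⁻¹)(t) → L > 0`, and `Λ* ∈ (0,1)` solves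
`(1-Λ*)Λ*^(-β/(β-1)) = L`, then `x(t)/F⁻¹(t) → Λ*^(-1/(β-1)) > 1`; in particular the
solution of the perturbed equation decays at the same regularly varying order as, but
strictly more slowly than, any solution `y` of the unperturbed equation `y' = -f(y)`
with `y(0) = ζ > 0`, for which `y(t)/F⁻¹(t) → 1`. -/
theorem stmt_11
    (f g F Finv : ℝ → ℝ) (ξ : ℝ) (x : ℝ → ℝ)
    (hf_cont : Continuous f) (hf_lip : LocallyLipschitz f)
    (hf_sign : ∀ y : ℝ, y ≠ 0 → 0 < y * f y) (hf_zero : f 0 = 0)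
    (hg_cont : ContinuousOn g (Set.Ici 0)) (hg_pos : ∀ t : ℝ, 0 < t → 0 < g t)
    (hF : ∀ y : ℝ, 0 < y → F y = ∫ u in y..(1:ℝ), 1 / f u)
    (hF_top : Tendsto F (nhdsWithin 0 (Set.Ioi 0)) atTop)
    (hF_anti : StrictAntiOn F (Set.Ioi 0))
    (hFinv : ∀ t : ℝ, 0 ≤ t → 0 < Finv t ∧ F (Finv t) = t)
    (hFinv_to0 : Tendsto Finv atTop (nhds 0))
    (hξ : 0 < ξ) (hx : IsSol f g ξ x)
    (hM : ∃ δ : ℝ, 0 < δ ∧ ∃ φ : ℝ → ℝ, StrictMonoOn φ (Set.Ioo 0 δ) ∧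
      Tendsto (fun y => f y / φ y) (nhdsWithin 0 (Set.Ioi 0)) (nhds 1))
    (β : ℝ) (hβ : 1 < β) (hfRV : RVat0 f β)
    (L : ℝ) (hLpos : 0 < L)
    (hL : Tendsto (fun t => g t / f (Finv t)) atTop (nhds L))
    (Λ : ℝ) (hΛ : Λ ∈ Set.Ioo (0:ℝ) 1) (hΛeq : (1 - Λ) * Λ ^ (-β / (β - 1)) = L) :
    Tendsto (fun t => x t / Finv t) atTop (nhds (Λ ^ (-1 / (β - 1)))) ∧
    1 < Λ ^ (-1 / (β - 1)) ∧
    (∀ ζ : ℝ, 0 < ζ → ∀ y : ℝ → ℝ, IsSol f (fun _ => 0) ζ y →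
      Tendsto (fun t => y t / Finv t) atTop (nhds 1)) := by
  obtain ⟨δ, hδ, φ, hφ, hfφ⟩ := hM
  have hpos : ∀ u, 0 < u → 0 < f u := fun u hu => (mul_pos_iff_of_pos_left hu).1 (hf_sign u hu.ne')
  exact stmt_11_general hf_cont.continuousOn hpos (fun t ht => (hg_pos t ht).le)
    (fun t ht => ⟨(hFinv t ht).1, (hF _ (hFinv t ht).1).symm.trans (hFinv t ht).2⟩) hξ hx
    (almostMonotoneAt0_of_tendsto_div hδ hpos hφ.monotoneOn hfφ) hβ hfRV hL hΛ hΛeq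
end
end
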